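/- Let α ∈ (0,1) and suppose that both c₁ and c₂ are of type ν for some ν ≥ 0. Let s > 1/2 and let s₁ ∈ ℝ satisfy s₁ − s < min{1, s − ν}. Then there exists a constant C > 0 (depending on α, s, s₁, ν and the type constant K) such that for all sequences a, b : ℤ → ℂ, Σ_{k ∈ ℤ, k ≠ 0} ⟨k⟩^{2s₁} | Σ_{k₁ ∈ ℤ} k · a_{k₁} b_{k − k₁} / (k³ − αk₁³ − α(k − k₁)³) |² ≤ C · (Σ_{m ∈ ℤ} ⟨m⟩^{2s} |a_m|²) · (Σ_{n ∈ ℤ} ⟨n⟩^{2s} |b_n|²). (For k ≠ 0 the denominator k³ − αk₁³ − α(k − k₁)³ = −3αk(k₁ − c₁k)(k₁ − c₂k) never vanishes, since c₁ and c₂ are irrational.) -/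

import Mathlib

/-- The Japanese bracket `⟨x⟩ = (1 + x²)^{1/2}`. -/
noncomputable def jb (x : ℝ) : ℝ := Real.sqrt (1 + x^2)

/-- The larger root `c₁ = 1/2 + √(12/α − 3)/6` of `3αx² − 3αx + (α − 1)`. -/
noncomputable def c1 (α : ℝ) : ℝ := 1/2 + Real.sqrt (12/α - 3)/6

/-- The smaller root `c₂ = 1/2 − √(12/α − 3)/6` of `3αx² − 3αx + (α − 1)`. -/
noncomputable def c2 (α : ℝ) : ℝ := 1/2 - Real.sqrt (12/α - 3)/6

/-- A real number `ρ` is of type `ν` if there is `K > 0` with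
`|ρ − m/n| ≥ K/|n|^{2+ν}` for all integers `m` and all nonzero integers `n`. -/
def IsOfType (ρ ν : ℝ) : Prop :=
  ∃ K > 0, ∀ m n : ℤ, n ≠ 0 → K / |(n : ℝ)| ^ (2 + ν) ≤ |ρ - (m : ℝ) / (n : ℝ)|

/-- The `k₁`-summand of the bilinear form `B₁`: `k·a_{k₁}·b_{k−k₁}/(k³ − αk₁³ − α(k−k₁)³)`. -/
noncomputable def B1term (α : ℝ) (a b : ℤ → ℂ) (k k₁ : ℤ) : ℂ :=
  ((k : ℂ) * a k₁ * b (k - k₁)) /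
    ((((k : ℝ)^3 - α * (k₁ : ℝ)^3 - α * ((k : ℝ) - (k₁ : ℝ))^3 : ℝ)) : ℂ)

lemma jb_sq (x : ℝ) : jb x ^ 2 = 1 + x ^ 2 := Real.sq_sqrt (by positivity)

lemma jb_nonneg (x : ℝ) : 0 ≤ jb x := Real.sqrt_nonneg _

lemma one_le_jb (x : ℝ) : 1 ≤ jb x := by
  unfold jb
  rw [Real.one_le_sqrt]
  nlinarith [sq_nonneg x]

lemma jb_pos (x : ℝ) : 0 < jb x := lt_of_lt_of_le one_pos (one_le_jb x)

lemma abs_le_jb (x : ℝ) : |x| ≤ jb x := by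
  apply abs_le_of_sq_le_sq _ (jb_nonneg x)
  rw [jb_sq]; linarith

lemma jb_le_one_add (x : ℝ) : jb x ≤ 1 + |x| := by
  apply le_of_sq_le_sq _ (by positivity)
  rw [jb_sq]
  nlinarith [sq_abs x, abs_nonneg x]

lemma summable_jb {s : ℝ} (hs : 1/2 < s) : Summable (fun m : ℤ => jb (m : ℝ) ^ (-(2 * s))) := by
  have h := Real.summable_abs_int_rpow (b := 2 * s) (by linarith)
  refine Summable.of_norm_bounded_eventually h ?_
  have : ({0}ᶜ : Set ℤ) ∈ (Filter.cofinite : Filter ℤ) := (Set.finite_singleton 0).compl_mem_cofinite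
  filter_upwards [this] with m hm
  have hm' : (m : ℝ) ≠ 0 := by simpa using hm
  rw [Real.norm_of_nonneg (Real.rpow_nonneg (jb_nonneg _) _)]
  exact Real.rpow_le_rpow_of_nonpos (abs_pos.mpr hm') (abs_le_jb _) (by linarith)

/-- the comparison weight -/
noncomputable def wt (c s : ℝ) (k k₁ : ℤ) : ℝ :=
  jb (k₁ : ℝ) ^ (-(2 * s)) + jb (((k - k₁ : ℤ)) : ℝ) ^ (-(2 * s))
    + (if k₁ = ⌊c * k⌋ then 1 else 0) + (if k₁ = ⌊c * k⌋ + 1 then 1 else 0)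

lemma wt_nonneg (c s : ℝ) (k k₁ : ℤ) : 0 ≤ wt c s k k₁ := by
  unfold wt
  have := Real.rpow_nonneg (jb_nonneg (k₁ : ℝ)) (-(2 * s))
  have := Real.rpow_nonneg (jb_nonneg ((k - k₁ : ℤ) : ℝ)) (-(2 * s))
  split_ifs <;> positivity

lemma wt_hasSum (c : ℝ) {s : ℝ} (hs : 1/2 < s) (k : ℤ) :
    HasSum (fun k₁ => wt c s k k₁)
      ((∑' m : ℤ, jb (m : ℝ) ^ (-(2 * s))) + (∑' m : ℤ, jb (m : ℝ) ^ (-(2 * s))) + 1 + 1) := by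
  unfold wt
  have h := (summable_jb hs).hasSum
  have h2 := (Equiv.subLeft k).hasSum_iff.mpr h
  exact ((h.add h2).add (hasSum_ite_eq _ _)).add (hasSum_ite_eq _ _)

lemma jb_bound {c : ℝ} (hc : c ≠ 0) {k t : ℝ} (hk : 1 ≤ |k|) (h : |c| * |k| ≤ |t| + 1) :
    jb k ≤ (4 / |c|) * jb t := by
  have h1 := jb_le_one_add k
  have h2 := abs_le_jb t
  have h3 := one_le_jb t
  have hc' := abs_pos.mpr hc
  rw [div_mul_eq_mul_div, le_div_iff₀ hc']
  nlinarith

set_option maxHeartbeats 1000000 in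
lemma pt {c ν s s₁ d : ℝ} (hs : 0 < s) (h1 : s₁ ≤ s + 1) (h2 : s₁ ≤ 2 * s - ν) (hν : 0 ≤ ν)
    (hc0 : c ≠ 0) (hc1 : 1 - c ≠ 0) (hc : IsOfType c ν) (hd : 0 < d) :
    ∃ C > 0, ∀ k k₁ : ℤ, k ≠ 0 → ∀ y : ℝ, d * |(k : ℝ)| ≤ |y| →
      jb (k : ℝ) ^ (2 * s₁) ≤ C * wt c s k k₁ * (((k₁ : ℝ) - c * k) ^ 2 * y ^ 2) *
        (jb (k₁ : ℝ) ^ (2 * s) * jb (((k - k₁ : ℤ)) : ℝ) ^ (2 * s)) := by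
  obtain ⟨K, hK, hKb⟩ := hc
  set C1 : ℝ := 2 ^ (2 * s) * (2 / d ^ 2) with hC1
  set C2 : ℝ := (4 / |c|) ^ (2 * s) * (4 / |1 - c|) ^ (2 * s) / (K * d) ^ 2 with hC2
  have hC1p : 0 < C1 := by positivity
  have hca := abs_pos.mpr hc0
  have hca1 := abs_pos.mpr hc1
  have hC2p : 0 < C2 := by positivity
  refine ⟨C1 + C2, by positivity, ?_⟩
  intro k k₁ hk y hy
  have hkR : (1 : ℝ) ≤ |(k : ℝ)| := by exact_mod_cast Int.one_le_abs hk
  have hJ := one_le_jb (k : ℝ)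
  have hJ0 := jb_pos (k : ℝ)
  set l : ℤ := k - k₁ with hl
  have hlR : (l : ℝ) = k - k₁ := by simp [hl]
  set P1 := jb (k₁ : ℝ) ^ (2 * s) with hP1
  set P2 := jb (l : ℝ) ^ (2 * s) with hP2
  have hP1p : 0 < P1 := Real.rpow_pos_of_pos (jb_pos _) _
  have hP2p : 0 < P2 := Real.rpow_pos_of_pos (jb_pos _) _
  set x := (k₁ : ℝ) - c * k with hx
  have hy2 : d ^ 2 * (k : ℝ) ^ 2 ≤ y ^ 2 := by
    have := pow_le_pow_left₀ (by positivity) hy 2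
    simpa [mul_pow] using this
  have hwt0 := wt_nonneg c s k k₁
  have hxy : 0 ≤ x ^ 2 * y ^ 2 := by positivity
  by_cases hx1 : 1 ≤ |x|
  · have e1 : jb (k : ℝ) ^ (2 * s₁) ≤ jb (k : ℝ) ^ (2 * s) * jb (k : ℝ) ^ 2 := by
      rw [← Real.rpow_natCast, ← Real.rpow_add hJ0]
      exact Real.rpow_le_rpow_of_exponent_le hJ (by push_cast; linarith)
    have e2 : jb (k : ℝ) ^ 2 ≤ 2 / d ^ 2 * (x ^ 2 * y ^ 2) := by
      rw [jb_sq, div_mul_eq_mul_div, le_div_iff₀ (by positivity)]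
      have hx2 : 1 ≤ x ^ 2 := by rw [← sq_abs]; nlinarith
      have hk2 : 1 ≤ (k : ℝ) ^ 2 := by rw [← sq_abs]; nlinarith
      have : y ^ 2 ≤ x ^ 2 * y ^ 2 := le_mul_of_one_le_left (sq_nonneg _) hx2
      have : d ^ 2 * 1 ≤ d ^ 2 * (k : ℝ) ^ 2 := by gcongr
      linarith
    have e3 : jb (k : ℝ) ^ (2 * s) ≤ 2 ^ (2 * s) * (P1 + P2) := by
      have hm : jb (k : ℝ) ≤ 2 * max (jb (k₁ : ℝ)) (jb (l : ℝ)) := by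
        apply le_of_sq_le_sq _ (by have := jb_pos (k₁ : ℝ); positivity)
        have a1 := pow_le_pow_left₀ (jb_nonneg _) (le_max_left (jb (k₁ : ℝ)) (jb (l : ℝ))) 2
        have a2 := pow_le_pow_left₀ (jb_nonneg _) (le_max_right (jb (k₁ : ℝ)) (jb (l : ℝ))) 2
        rw [jb_sq] at a1 a2
        rw [jb_sq, mul_pow]
        rw [hlR] at a1 a2 ⊢
        nlinarith [sq_nonneg (2 * (k₁ : ℝ) - k)]
      calc jb (k : ℝ) ^ (2 * s) ≤ (2 * max (jb (k₁ : ℝ)) (jb (l : ℝ))) ^ (2 * s) :=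
            Real.rpow_le_rpow hJ0.le hm (by linarith)
        _ = 2 ^ (2 * s) * (max (jb (k₁ : ℝ)) (jb (l : ℝ))) ^ (2 * s) :=
            Real.mul_rpow (by norm_num) (le_max_of_le_left (jb_nonneg _))
        _ ≤ _ := by
            gcongr
            rcases max_cases (jb (k₁ : ℝ)) (jb (l : ℝ)) with h | h <;> rw [h.1] <;> linarith
    have e4 : P1 + P2 ≤ wt c s k k₁ * (P1 * P2) := by
      have : P1⁻¹ + P2⁻¹ ≤ wt c s k k₁ := by
        unfold wt
        rw [Real.rpow_neg (jb_nonneg _), Real.rpow_neg (jb_nonneg _)]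
        split_ifs <;> linarith
      calc P1 + P2 = (P1⁻¹ + P2⁻¹) * (P1 * P2) := by field_simp; ring
        _ ≤ _ := by gcongr
    calc jb (k : ℝ) ^ (2 * s₁) ≤ jb (k : ℝ) ^ (2 * s) * jb (k : ℝ) ^ 2 := e1
      _ ≤ (2 ^ (2 * s) * (wt c s k k₁ * (P1 * P2))) * (2 / d ^ 2 * (x ^ 2 * y ^ 2)) := by
          apply mul_le_mul _ e2 (by positivity) (by positivity)
          exact e3.trans (by gcongr)
      _ = C1 * wt c s k k₁ * (x ^ 2 * y ^ 2) * (P1 * P2) := by rw [hC1]; ring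
      _ ≤ _ := by gcongr; linarith
  · push Not at hx1
    have e1 : jb (k : ℝ) ^ (2 * s₁) ≤
        jb (k : ℝ) ^ (2 * s) * jb (k : ℝ) ^ (2 * s) * (jb (k : ℝ) ^ (-ν)) ^ 2 := by
      rw [← Real.rpow_natCast, ← Real.rpow_mul hJ0.le, ← Real.rpow_add hJ0, ← Real.rpow_add hJ0]
      exact Real.rpow_le_rpow_of_exponent_le hJ (by push_cast; linarith)
    have hk0 : (k : ℝ) ≠ 0 := by exact_mod_cast hk
    have e2 : K * d * jb (k : ℝ) ^ (-ν) ≤ |x| * |y| := by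
      have hkp : 0 < |(k : ℝ)| := by linarith
      have a1 : jb (k : ℝ) ^ (-ν) ≤ |(k : ℝ)| ^ (-ν) :=
        Real.rpow_le_rpow_of_nonpos hkp (abs_le_jb _) (by linarith)
      have a2 : K * |(k : ℝ)| ^ (-(1 + ν)) ≤ |x| := by
        have h := hKb k₁ k hk
        have : |x| = |c - (k₁ : ℝ) / k| * |(k : ℝ)| := by
          rw [← abs_mul, hx, abs_sub_comm]; congr 1; field_simp
        rw [this]
        calc K * |(k : ℝ)| ^ (-(1 + ν)) = K / |(k : ℝ)| ^ (2 + ν) * |(k : ℝ)| := by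
              rw [show -(1 + ν) = -(2 + ν) + 1 by ring, Real.rpow_add hkp, Real.rpow_neg hkp.le,
                Real.rpow_one]; ring
          _ ≤ _ := by gcongr
      calc K * d * jb (k : ℝ) ^ (-ν) ≤ K * d * |(k : ℝ)| ^ (-ν) := by gcongr
        _ = (K * |(k : ℝ)| ^ (-(1 + ν))) * (d * |(k : ℝ)|) := by
            rw [show -ν = -(1 + ν) + 1 by ring, Real.rpow_add hkp, Real.rpow_one]; ring_nf
        _ ≤ _ := by gcongr
    have e2' : (jb (k : ℝ) ^ (-ν)) ^ 2 ≤ (x ^ 2 * y ^ 2) / (K * d) ^ 2 := by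
      rw [le_div_iff₀ (by positivity)]
      have := pow_le_pow_left₀ (by have := Real.rpow_nonneg hJ0.le (-ν); positivity) e2 2
      rw [mul_pow, mul_pow |x|, sq_abs, sq_abs] at this
      linarith
    have e3 : jb (k : ℝ) ^ (2 * s) ≤ (4 / |c|) ^ (2 * s) * P1 := by
      rw [hP1, ← Real.mul_rpow (by positivity) (jb_nonneg _)]
      apply Real.rpow_le_rpow hJ0.le _ (by linarith)
      apply jb_bound hc0 hkR
      rw [← abs_mul]
      have : c * (k : ℝ) = k₁ - x := by rw [hx]; ring
      rw [this]
      linarith [abs_sub (k₁ : ℝ) x]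
    have e4 : jb (k : ℝ) ^ (2 * s) ≤ (4 / |1 - c|) ^ (2 * s) * P2 := by
      rw [hP2, ← Real.mul_rpow (by positivity) (jb_nonneg _)]
      apply Real.rpow_le_rpow hJ0.le _ (by linarith)
      apply jb_bound hc1 hkR
      rw [← abs_mul]
      have : (1 - c) * (k : ℝ) = l + x := by rw [hx, hlR]; ring
      rw [this]
      linarith [abs_add_le (l : ℝ) x]
    have e5 : 1 ≤ wt c s k k₁ := by
      have h0 := Int.floor_le (c * k)
      have h0' := Int.lt_floor_add_one (c * k)
      have b := abs_lt.mp hx1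
      have hk1 : k₁ = ⌊c * k⌋ ∨ k₁ = ⌊c * k⌋ + 1 := by
        have b1 : (⌊c * k⌋ : ℝ) - 1 < k₁ := by linarith
        have b2 : (k₁ : ℝ) < ⌊c * k⌋ + 2 := by linarith
        have b1' : ⌊c * k⌋ - 1 < k₁ := by exact_mod_cast b1
        have b2' : k₁ < ⌊c * k⌋ + 2 := by exact_mod_cast b2
        omega
      unfold wt
      have := Real.rpow_nonneg (jb_nonneg (k₁ : ℝ)) (-(2 * s))
      have := Real.rpow_nonneg (jb_nonneg ((k - k₁ : ℤ) : ℝ)) (-(2 * s))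
      rcases hk1 with h | h
      · rw [if_pos h]; split_ifs <;> linarith
      · rw [if_pos h]; split_ifs <;> linarith
    have hJs := Real.rpow_pos_of_pos hJ0 (2 * s)
    calc jb (k : ℝ) ^ (2 * s₁)
        ≤ jb (k : ℝ) ^ (2 * s) * jb (k : ℝ) ^ (2 * s) * (jb (k : ℝ) ^ (-ν)) ^ 2 := e1
      _ ≤ ((4 / |c|) ^ (2 * s) * P1) * ((4 / |1 - c|) ^ (2 * s) * P2) *
            ((x ^ 2 * y ^ 2) / (K * d) ^ 2) := by gcongr
      _ = C2 * 1 * (x ^ 2 * y ^ 2) * (P1 * P2) := by rw [hC2]; ring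
      _ ≤ _ := by gcongr; linarith

lemma cs_lemma (T : ℤ → ℤ → ℂ) (J : ℤ → ℝ) (W : ℤ → ℤ → ℝ) (P Q : ℤ → ℝ) (M : ℝ)
    (hJ : ∀ k, 0 < J k) (hW : ∀ k k₁, 0 ≤ W k k₁) (hM : 0 ≤ M)
    (hWs : ∀ k, Summable (W k)) (hWM : ∀ k, ∑' k₁, W k k₁ ≤ M)
    (hP : ∀ k, 0 ≤ P k) (hQ : ∀ k, 0 ≤ Q k) (hPs : Summable P) (hQs : Summable Q)
    (h : ∀ k k₁ : ℤ, k ≠ 0 → J k * ‖T k k₁‖ ^ 2 ≤ W k k₁ * (P k₁ * Q (k - k₁))) :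
    (∀ k : ℤ, k ≠ 0 → Summable (T k)) ∧
    Summable (fun k : ℤ => if k = 0 then (0 : ℝ) else J k * ‖∑' k₁ : ℤ, T k k₁‖ ^ 2) ∧
    (∑' k : ℤ, if k = 0 then (0 : ℝ) else J k * ‖∑' k₁ : ℤ, T k k₁‖ ^ 2)
      ≤ M * (∑' m, P m) * (∑' n, Q n) := by
  -- the double sum
  let e : ℤ × ℤ ≃ ℤ × ℤ :=
    { toFun := fun p => (p.2, p.1 - p.2)
      invFun := fun q => (q.1 + q.2, q.1)
      left_inv := fun p => by simp
      right_inv := fun q => by simp }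
  have hprod : HasSum (fun q : ℤ × ℤ => P q.1 * Q q.2) ((∑' m, P m) * (∑' n, Q n)) :=
    hPs.hasSum.mul hQs.hasSum (hPs.mul_of_nonneg hQs hP hQ)
  have hS : HasSum (fun p : ℤ × ℤ => P p.2 * Q (p.1 - p.2)) ((∑' m, P m) * (∑' n, Q n)) :=
    e.hasSum_iff.mpr hprod
  have hSk : ∀ k, Summable (fun k₁ => P k₁ * Q (k - k₁)) := fun k => hS.summable.prod_factor k
  have hSS := hS.prod_fiberwise (fun k => (hSk k).hasSum)
  have hpq : ∀ k k₁, 0 ≤ P k₁ * Q (k - k₁) := fun k k₁ => mul_nonneg (hP _) (hQ _)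
  have key : ∀ k, k ≠ 0 → Summable (fun k₁ => ‖T k k₁‖) ∧
      J k * (∑' k₁, ‖T k k₁‖) ^ 2 ≤ M * ∑' k₁, P k₁ * Q (k - k₁) := by
    intro k hk
    have hb : ∀ k₁, √(J k) * ‖T k k₁‖ ≤ √(W k k₁) * √(P k₁ * Q (k - k₁)) := by
      intro k₁
      rw [← Real.sqrt_mul (hW _ _)]
      apply Real.le_sqrt_of_sq_le
      rw [mul_pow, Real.sq_sqrt (hJ k).le]
      exact h k k₁ hk
    have hcs := Real.summable_and_inner_le_Lp_mul_Lq_tsum_of_nonneg (p := 2) (q := 2)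
      (f := fun k₁ => √(W k k₁)) (g := fun k₁ => √(P k₁ * Q (k - k₁)))
      Real.HolderConjugate.two_two (fun _ => Real.sqrt_nonneg _) (fun _ => Real.sqrt_nonneg _)
      (by simpa [Real.sq_sqrt (hW k _)] using hWs k)
      (by simpa only [Real.rpow_two, Real.sq_sqrt (hpq k _)] using hSk k)
    simp only [Real.rpow_two, Real.sq_sqrt (hW k _), Real.sq_sqrt (hpq k _),
      ← Real.sqrt_eq_rpow] at hcs
    obtain ⟨hcs1, hcs2⟩ := hcs
    have hs1 : Summable (fun k₁ => √(J k) * ‖T k k₁‖) :=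
      Summable.of_nonneg_of_le (fun _ => by positivity) hb hcs1
    have hJ0 : √(J k) ≠ 0 := (Real.sqrt_pos.mpr (hJ k)).ne'
    have hs2 : Summable (fun k₁ => ‖T k k₁‖) := (summable_mul_left_iff hJ0).mp hs1
    refine ⟨hs2, ?_⟩
    have h3 : √(J k) * ∑' k₁, ‖T k k₁‖ ≤ √(∑' k₁, W k k₁) * √(∑' k₁, P k₁ * Q (k - k₁)) := by
      rw [← tsum_mul_left]
      exact (hs1.tsum_le_tsum hb hcs1).trans hcs2
    have h0 : 0 ≤ ∑' k₁, P k₁ * Q (k - k₁) := tsum_nonneg (hpq k)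
    have h4 := pow_le_pow_left₀ (mul_nonneg (Real.sqrt_nonneg _)
      (tsum_nonneg (fun k₁ => norm_nonneg (T k k₁)))) h3 2
    rw [mul_pow, mul_pow, Real.sq_sqrt (hJ k).le, Real.sq_sqrt (tsum_nonneg (hW k)),
      Real.sq_sqrt h0] at h4
    exact h4.trans (mul_le_mul_of_nonneg_right (hWM k) h0)
  have hle : ∀ k : ℤ, (if k = 0 then (0 : ℝ) else J k * ‖∑' k₁ : ℤ, T k k₁‖ ^ 2)
      ≤ M * ∑' k₁, P k₁ * Q (k - k₁) := by
    intro k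
    split_ifs with hk
    · exact mul_nonneg hM (tsum_nonneg (hpq k))
    · refine le_trans ?_ (key k hk).2
      have := hJ k
      gcongr
      exact norm_tsum_le_tsum_norm (key k hk).1
  have hMs := hSS.mul_left M
  have hsum : Summable (fun k : ℤ => if k = 0 then (0 : ℝ) else J k * ‖∑' k₁ : ℤ, T k k₁‖ ^ 2) := by
    refine Summable.of_nonneg_of_le (fun k => ?_) hle hMs.summable
    have := hJ k
    split_ifs <;> positivity
  refine ⟨fun k hk => (key k hk).1.of_norm, hsum, ?_⟩
  calc _ ≤ ∑' k, M * ∑' k₁, P k₁ * Q (k - k₁) := hsum.tsum_le_tsum hle hMs.summable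
    _ = _ := by rw [hMs.tsum_eq, mul_assoc]

/-- The bilinear `H^{s₁} × H^s × H^s` estimate for `B₁`: if `α ∈ (0,1)`, `c₁, c₂` are of type
`ν ≥ 0`, `s > 1/2` and `s₁ − s < min{1, s − ν}`, then
`Σ_{k ≠ 0} ⟨k⟩^{2s₁} |Σ_{k₁} k·a_{k₁}·b_{k−k₁}/(k³ − αk₁³ − α(k−k₁)³)|²
  ≤ C (Σ_m ⟨m⟩^{2s}|a_m|²)(Σ_n ⟨n⟩^{2s}|b_n|²)`. -/
theorem B1_bilinear_estimate (α : ℝ) (hα : α ∈ Set.Ioo (0 : ℝ) 1) (ν : ℝ) (hν : 0 ≤ ν)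
    (hc1 : IsOfType (c1 α) ν) (hc2 : IsOfType (c2 α) ν)
    (s s₁ : ℝ) (hs : 1/2 < s) (hs₁ : s₁ - s < min 1 (s - ν)) :
    ∃ C > 0, ∀ a b : ℤ → ℂ,
      Summable (fun m : ℤ => jb (m : ℝ) ^ (2 * s) * ‖a m‖^2) →
      Summable (fun n : ℤ => jb (n : ℝ) ^ (2 * s) * ‖b n‖^2) →
      (∀ k : ℤ, k ≠ 0 → Summable (fun k₁ : ℤ => B1term α a b k k₁)) ∧
      Summable (fun k : ℤ =>
        if k = 0 then (0 : ℝ)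
        else jb (k : ℝ) ^ (2 * s₁) * ‖∑' k₁ : ℤ, B1term α a b k k₁‖^2) ∧
      (∑' k : ℤ,
        if k = 0 then (0 : ℝ)
        else jb (k : ℝ) ^ (2 * s₁) * ‖∑' k₁ : ℤ, B1term α a b k k₁‖^2)
        ≤ C * (∑' m : ℤ, jb (m : ℝ) ^ (2 * s) * ‖a m‖^2)
            * (∑' n : ℤ, jb (n : ℝ) ^ (2 * s) * ‖b n‖^2) := by
  obtain ⟨hα0, hα1⟩ := hα
  have hlt1 : s₁ - s < 1 := hs₁.trans_le (min_le_left _ _)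
  have hlt2 : s₁ - s < s - ν := hs₁.trans_le (min_le_right _ _)
  set r := Real.sqrt (12/α - 3) with hr
  have h12 : 12 < 12 / α := by rw [lt_div_iff₀ hα0]; linarith
  have hr2 : r ^ 2 = 12 / α - 3 := Real.sq_sqrt (by linarith)
  have hr3 : 3 < r := by
    rw [hr]; apply Real.lt_sqrt_of_sq_lt; linarith
  have hr2' : α * r ^ 2 = 12 - 3 * α := by rw [hr2]; field_simp
  have e1 : c1 α = 1 / 2 + r / 6 := rfl
  have e2 : c2 α = 1 / 2 - r / 6 := rfl
  obtain ⟨C1, hC1, H1⟩ := pt (d := r / 6) (s := s) (s₁ := s₁) (by linarith) (by linarith)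
    (by linarith) hν (by rw [e1]; linarith) (by rw [e1]; linarith) hc1 (by linarith)
  obtain ⟨C2, hC2, H2⟩ := pt (d := r / 6) (s := s) (s₁ := s₁) (by linarith) (by linarith)
    (by linarith) hν (by rw [e2]; linarith) (by rw [e2]; linarith) hc2 (by linarith)
  set S := (∑' m : ℤ, jb (m : ℝ) ^ (-(2 * s))) with hS
  have hS0 : 0 ≤ S := tsum_nonneg fun m => Real.rpow_nonneg (jb_nonneg _) _
  let W : ℤ → ℤ → ℝ := fun k k₁ =>
    (C1 * wt (c1 α) s k k₁ + C2 * wt (c2 α) s k k₁) / (3 * α) ^ 2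
  have hWsum : ∀ k, HasSum (W k)
      ((C1 * (S + S + 1 + 1) + C2 * (S + S + 1 + 1)) / (3 * α) ^ 2) := fun k =>
    (((wt_hasSum (c1 α) hs k).mul_left C1).add ((wt_hasSum (c2 α) hs k).mul_left C2)).div_const _
  refine ⟨(C1 * (S + S + 1 + 1) + C2 * (S + S + 1 + 1)) / (3 * α) ^ 2, by positivity, ?_⟩
  intro a b ha hb
  refine cs_lemma (fun k k₁ => B1term α a b k k₁) (fun k => jb (k : ℝ) ^ (2 * s₁)) W
    (fun m => jb (m : ℝ) ^ (2 * s) * ‖a m‖ ^ 2) (fun n => jb (n : ℝ) ^ (2 * s) * ‖b n‖ ^ 2)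
    _ (fun k => Real.rpow_pos_of_pos (jb_pos _) _) ?_ (by positivity) (fun k => (hWsum k).summable)
    (fun k => (hWsum k).tsum_eq.le)
    (fun m => mul_nonneg (Real.rpow_nonneg (jb_nonneg _) _) (sq_nonneg _))
    (fun m => mul_nonneg (Real.rpow_nonneg (jb_nonneg _) _) (sq_nonneg _)) ha hb ?_
  · intro k k₁
    have := wt_nonneg (c1 α) s k k₁
    have := wt_nonneg (c2 α) s k k₁
    positivity
  intro k k₁ hk
  have hk0 : (k : ℝ) ≠ 0 := by exact_mod_cast hk
  have hw1 := wt_nonneg (c1 α) s k k₁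
  have hw2 := wt_nonneg (c2 α) s k k₁
  set x := (k₁ : ℝ) - c1 α * k with hx
  set y := (k₁ : ℝ) - c2 α * k with hy
  have hP1 : 0 < jb (k₁ : ℝ) ^ (2 * s) := Real.rpow_pos_of_pos (jb_pos _) _
  have hP2 : 0 < jb ((k - k₁ : ℤ) : ℝ) ^ (2 * s) := Real.rpow_pos_of_pos (jb_pos _) _
  have hJ : 0 < jb (k : ℝ) ^ (2 * s₁) := Real.rpow_pos_of_pos (jb_pos _) _
  have hsumxy : r / 3 * |(k : ℝ)| ≤ |x| + |y| := by
    have : y - x = r / 3 * k := by rw [hx, hy, e1, e2]; ring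
    have h := abs_sub y x
    rw [this, abs_mul, abs_of_pos (by linarith : (0:ℝ) < r / 3)] at h
    linarith
  have main : jb (k : ℝ) ^ (2 * s₁) ≤
      (C1 * wt (c1 α) s k k₁ + C2 * wt (c2 α) s k k₁) * (x ^ 2 * y ^ 2) *
        (jb (k₁ : ℝ) ^ (2 * s) * jb (((k - k₁ : ℤ)) : ℝ) ^ (2 * s)) := by
    rcases le_total |x| |y| with h | h
    · refine (H1 k k₁ hk y (by linarith)).trans ?_
      gcongr
      have := mul_nonneg hC2.le hw2
      linarith
    · refine (H2 k k₁ hk x (by linarith)).trans ?_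
      rw [← hy, mul_comm (y ^ 2)]
      gcongr
      have := mul_nonneg hC1.le hw1
      linarith
  have hden : (k : ℝ)^3 - α * (k₁ : ℝ)^3 - α * ((k : ℝ) - (k₁ : ℝ))^3
      = -(3 * α * k * (x * y)) := by
    rw [hx, hy, e1, e2]
    linear_combination (-(k : ℝ) ^ 3 / 12) * hr2'
  have hxy : x * y ≠ 0 := by
    intro h0
    rw [← mul_pow, h0] at main
    norm_num at main
    linarith
  have hT : ‖B1term α a b k k₁‖ ^ 2 = ‖a k₁‖ ^ 2 * ‖b (k - k₁)‖ ^ 2 / ((3 * α) ^ 2 * (x ^ 2 * y ^ 2)) := by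
    unfold B1term
    rw [hden, norm_div, norm_mul, norm_mul, Complex.norm_real, Complex.norm_intCast, norm_neg,
      Real.norm_eq_abs, div_pow, sq_abs, mul_pow, mul_pow, sq_abs]
    have := hα0.ne'
    have hx0 := left_ne_zero_of_mul hxy
    have hy0 := right_ne_zero_of_mul hxy
    field_simp
  have hxy2 : 0 < x ^ 2 * y ^ 2 := by rw [← mul_pow]; positivity
  simp only [W]
  rw [hT, mul_div_assoc', div_mul_eq_mul_div, div_le_div_iff₀ (by positivity) (by positivity)]
  have := mul_le_mul_of_nonneg_right main
    (by positivity : 0 ≤ ‖a k₁‖ ^ 2 * ‖b (k - k₁)‖ ^ 2 * (3 * α) ^ 2)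
  refine le_trans (le_of_eq ?_) (this.trans (le_of_eq ?_)) <;> ring
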